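/- arXiv:1709.06608 — 2 statements merged into one kernel-verified Lean document; each statement's English description precedes it below -/
import Mathlib

section
/- For all p ≥ 4 and q ≥ 0 there is an isomorphism of real associative unital algebras Cl_{p, q} ≅ Cl_{p−4, q+4}. -/
open CliffordAlgebra

/-- The quadratic form of signature `(p, q)` on `ℝ^(p+q)`:
`Q(x) = x₁² + ⋯ + x_p² − x_{p+1}² − ⋯ − x_{p+q}²`. -/
noncomputable def Qpq (p q : ℕ) : QuadraticForm ℝ (Fin (p + q) → ℝ) :=
  QuadraticMap.weightedSumSquares ℝ (fun i : Fin (p + q) => if (i : ℕ) < p then (1 : ℝ) else -1)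

/-- The real Clifford algebra `Cl_{p,q}`. -/
noncomputable abbrev Cl (p q : ℕ) : Type := CliffordAlgebra (Qpq p q)

/-- The generators `e_a` of `Cl_{p,q}`. -/
noncomputable def gen (p q : ℕ) (i : Fin (p + q)) : Cl p q :=
  ι (Qpq p q) (Pi.single i 1)

/-!
Two Clifford algebras that are isomorphic compatibly with parity stay isomorphic after adding the
same orthogonal summand to both forms, so it is enough to compare a form `Q` of rank `n` with `-Q`.
If `v₁, …, vₙ` is an orthogonal basis with `∏ Q (vᵢ) = 1` and `4 ∣ n`, then `ω = v₁ ⋯ vₙ` is even,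
anticommutes with every vector, and satisfies `ω² = (-1) ^ (n (n - 1) / 2) ∏ Q (vᵢ) = 1`. Hence
`(x ω)² = -x² ω² = -Q x`, and `x ↦ x ω` extends to an odd-preserving homomorphism from the Clifford
algebra of `-Q` to that of `Q`. It carries the element `ω` of the source to `ω`, so the same
construction for `-Q` is inverse to it.
-/

open QuadraticMap

section Ring

variable {A : Type*} [Ring A]

theorem prod_ofFn_mul_eq_smul {n : ℕ} {f : Fin n → A} {x : A} {s : Fin n → ℤˣ}
    (h : ∀ i, f i * x = s i • (x * f i)) :
    (List.ofFn f).prod * x = (∏ i, s i) • (x * (List.ofFn f).prod) := by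
  induction n with
  | zero => simp
  | succ n ih =>
    rw [List.ofFn_succ, List.prod_cons, Fin.prod_univ_succ, mul_assoc, ih fun i => h i.succ,
      mul_smul_comm, ← mul_assoc, h 0, smul_mul_assoc, smul_smul, mul_assoc, mul_comm (s 0)]

theorem prod_ofFn_mul_right_of_anticomm {n : ℕ} {f : Fin n → A} {a : A}
    (h : ∀ i, f i * a = -(a * f i)) :
    (List.ofFn fun i => f i * a).prod =
      (-1 : ℤˣ) ^ n.choose 2 • ((List.ofFn f).prod * a ^ n) := by
  induction n with
  | zero => simp
  | succ n ih =>
    set τ := (List.ofFn fun i : Fin n => f i.succ).prod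
    have swap : a * τ = (-1 : ℤˣ) ^ n • (τ * a) := by
      have := prod_ofFn_mul_eq_smul (f := fun i : Fin n => f i.succ) (x := a) (s := fun _ => -1)
        fun i => by simpa using h i.succ
      rw [this, Finset.prod_const, Finset.card_fin, smul_smul, ← mul_pow]
      simp [τ]
    calc (List.ofFn fun i => f i * a).prod
        = f 0 * a * ((-1 : ℤˣ) ^ n.choose 2 • (τ * a ^ n)) := by
          rw [List.ofFn_succ, List.prod_cons, ih fun i => h i.succ]
      _ = (-1 : ℤˣ) ^ n.choose 2 • (f 0 * (a * τ) * a ^ n) := by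
          rw [mul_smul_comm]
          simp only [mul_assoc]
      _ = (-1 : ℤˣ) ^ (n.choose 2 + n) • (f 0 * τ * a ^ (n + 1)) := by
          rw [swap, mul_smul_comm, smul_mul_assoc, smul_smul, ← pow_add, pow_succ' a]
          simp only [mul_assoc]
      _ = (-1 : ℤˣ) ^ (n + 1).choose 2 • ((List.ofFn f).prod * a ^ (n + 1)) := by
          rw [List.ofFn_succ, List.prod_cons, Nat.choose_succ_succ' n 1, Nat.choose_one_right,
            add_comm]

end Ring

section ProdMapLeft

variable {R M₁ M₁' M₂ : Type*} [CommRing R] [AddCommGroup M₁] [Module R M₁]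
  [AddCommGroup M₁'] [Module R M₁'] [AddCommGroup M₂] [Module R M₂]
  {Q₁ : QuadraticForm R M₁} {Q₁' : QuadraticForm R M₁'} (Q₂ : QuadraticForm R M₂)

/-- Functoriality of `Q₁ ↦ CliffordAlgebra (Q₁.prod Q₂)` in algebra homomorphisms which send vectors
to odd elements; these need not come from isometries. -/
noncomputable def prodMapLeft (f : CliffordAlgebra Q₁ →ₐ[R] CliffordAlgebra Q₁')
    (hf : ∀ x, f (ι Q₁ x) ∈ evenOdd Q₁' 1) :
    CliffordAlgebra (Q₁.prod Q₂) →ₐ[R] CliffordAlgebra (Q₁'.prod Q₂) :=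
  lift (Q₁.prod Q₂) ⟨((map (.inl Q₁' Q₂)).comp f).toLinearMap ∘ₗ ι Q₁ |>.coprod
      ((map (.inr Q₁' Q₂)).toLinearMap ∘ₗ ι Q₂), fun ⟨x, m⟩ => by
    have anticomm := map_mul_map_eq_neg_of_isOrtho_of_mem_evenOdd_one
      (.inl Q₁' Q₂) (.inr Q₁' Q₂) (fun _ _ => .inl_inr _ _) _ _ (hf x) (ι_mem_evenOdd_one Q₂ m)
    have sq_left := congrArg ((map (.inl Q₁' Q₂)).comp f) (ι_sq_scalar Q₁ x)
    have sq_right := congrArg (map (.inr Q₁' Q₂)) (ι_sq_scalar Q₂ m)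
    rw [map_mul, AlgHom.commutes] at sq_left sq_right
    simp only [LinearMap.coprod_apply, LinearMap.comp_apply, AlgHom.toLinearMap_apply,
      AlgHom.comp_apply] at sq_left ⊢
    rw [prod_apply, map_add, ← sq_left, ← sq_right, mul_add, add_mul, add_mul, anticomm]
    noncomm_ring⟩

theorem prodMapLeft_map_inl (f : CliffordAlgebra Q₁ →ₐ[R] CliffordAlgebra Q₁')
    (hf : ∀ x, f (ι Q₁ x) ∈ evenOdd Q₁' 1) (a : CliffordAlgebra Q₁) :
    prodMapLeft Q₂ f hf (map (.inl Q₁ Q₂) a) = map (.inl Q₁' Q₂) (f a) := by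
  suffices (prodMapLeft Q₂ f hf).comp (map (.inl Q₁ Q₂)) = (map (.inl Q₁' Q₂)).comp f from
    DFunLike.congr_fun this a
  ext x
  simp [prodMapLeft, ← Prod.zero_eq_mk]

theorem prodMapLeft_map_inr (f : CliffordAlgebra Q₁ →ₐ[R] CliffordAlgebra Q₁')
    (hf : ∀ x, f (ι Q₁ x) ∈ evenOdd Q₁' 1) (b : CliffordAlgebra Q₂) :
    prodMapLeft Q₂ f hf (map (.inr Q₁ Q₂) b) = map (.inr Q₁' Q₂) b := by
  suffices (prodMapLeft Q₂ f hf).comp (map (.inr Q₁ Q₂)) = map (.inr Q₁' Q₂) from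
    DFunLike.congr_fun this b
  ext m
  simp [prodMapLeft]

theorem prodMapLeft_comp_of_leftInverse {f : CliffordAlgebra Q₁ →ₐ[R] CliffordAlgebra Q₁'}
    {g : CliffordAlgebra Q₁' →ₐ[R] CliffordAlgebra Q₁}
    (hf : ∀ x, f (ι Q₁ x) ∈ evenOdd Q₁' 1) (hg : ∀ x, g (ι Q₁' x) ∈ evenOdd Q₁ 1)
    (h : Function.LeftInverse g f) :
    (prodMapLeft Q₂ g hg).comp (prodMapLeft Q₂ f hf) = AlgHom.id R _ := by
  ext x
  · simpa [prodMapLeft_map_inl, h (ι Q₁ x)] using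
      congrArg (prodMapLeft Q₂ g hg) (prodMapLeft_map_inl Q₂ f hf (ι Q₁ x))
  · simpa [prodMapLeft_map_inr] using
      (congrArg (prodMapLeft Q₂ g hg) (prodMapLeft_map_inr Q₂ f hf (ι Q₂ x))).trans
        (prodMapLeft_map_inr Q₂ g hg (ι Q₂ x))

/-- The isomorphism `CliffordAlgebra (Q₁.prod Q₂) ≃ₐ[R] CliffordAlgebra (Q₁'.prod Q₂)` induced by an
isomorphism of the Clifford algebras of `Q₁` and `Q₁'` compatible with their parity gradings. -/
noncomputable def prodCongrLeft (f : CliffordAlgebra Q₁ ≃ₐ[R] CliffordAlgebra Q₁')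
    (hf : ∀ x, f (ι Q₁ x) ∈ evenOdd Q₁' 1) (hf' : ∀ x, f.symm (ι Q₁' x) ∈ evenOdd Q₁ 1) :
    CliffordAlgebra (Q₁.prod Q₂) ≃ₐ[R] CliffordAlgebra (Q₁'.prod Q₂) :=
  .ofAlgHom (prodMapLeft Q₂ f hf) (prodMapLeft Q₂ f.symm hf')
    (prodMapLeft_comp_of_leftInverse Q₂ hf' hf f.right_inv)
    (prodMapLeft_comp_of_leftInverse Q₂ hf hf' f.left_inv)

end ProdMapLeft

section Chirality

variable {R M : Type*} [CommRing R] [AddCommGroup M] [Module R M] {Q Q' : QuadraticForm R M}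

/-- A chirality element of a Clifford algebra, in the sense of the matrix `γ⁵` of physics: an even
square root of one which anticommutes with all vectors. -/
structure IsChirality (Q : QuadraticForm R M) (ω : CliffordAlgebra Q) : Prop where
  mem_even : ω ∈ evenOdd Q 0
  mul_self : ω * ω = 1
  anticomm (x : M) : ω * ι Q x = -(ι Q x * ω)

namespace IsChirality

variable {ω : CliffordAlgebra Q} {ω' : CliffordAlgebra Q'}

theorem pow_of_even (hω : IsChirality Q ω) {n : ℕ} (hn : Even n) : ω ^ n = 1 := by
  obtain ⟨k, rfl⟩ := hn
  rw [pow_add, ← (Commute.refl ω).mul_pow, hω.mul_self, one_pow]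

theorem ι_mul_sq (hω : IsChirality Q ω) (x : M) :
    ι Q x * ω * (ι Q x * ω) = -algebraMap R _ (Q x) := by
  rw [mul_assoc, ← mul_assoc ω, hω.anticomm, neg_mul, mul_assoc, hω.mul_self, mul_one, mul_neg,
    ι_sq_scalar]

/-- The homomorphism `x ↦ x * ω` from the Clifford algebra of `Q' = -Q`. The form `Q'` is kept as a
variable so that a twist of `Q` and a twist of `-Q` can be composed. -/
noncomputable def twist (hω : IsChirality Q ω) (hQ : Q' = -Q) :
    CliffordAlgebra Q' →ₐ[R] CliffordAlgebra Q :=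
  lift Q' ⟨LinearMap.mulRight R ω ∘ₗ ι Q, fun x => by simp [hω.ι_mul_sq, hQ]⟩

theorem twist_ι (hω : IsChirality Q ω) (hQ : Q' = -Q) (x : M) :
    hω.twist hQ (ι Q' x) = ι Q x * ω :=
  lift_ι_apply ..

theorem twist_ι_mem_odd (hω : IsChirality Q ω) (hQ : Q' = -Q) (x : M) :
    hω.twist hQ (ι Q' x) ∈ evenOdd Q 1 := by
  rw [twist_ι]
  simpa only [add_zero] using SetLike.mul_mem_graded (ι_mem_evenOdd_one Q x) hω.mem_even

theorem twist_comp_twist (hω : IsChirality Q ω) (hω' : IsChirality Q' ω') (hQ : Q' = -Q)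
    (h : hω.twist hQ ω' = ω) :
    (hω.twist hQ).comp (hω'.twist (neg_eq_iff_eq_neg.1 hQ.symm)) = AlgHom.id R _ := by
  ext x
  simp [twist_ι, h, mul_assoc, hω.mul_self]

/-- The isomorphism given by the twists of two chirality elements that the twists exchange. -/
noncomputable def twistEquiv (hω : IsChirality Q ω) (hω' : IsChirality Q' ω') (hQ : Q' = -Q)
    (h : hω.twist hQ ω' = ω) (h' : hω'.twist (neg_eq_iff_eq_neg.1 hQ.symm) ω = ω') :
    CliffordAlgebra Q ≃ₐ[R] CliffordAlgebra Q' :=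
  .ofAlgHom (hω'.twist (neg_eq_iff_eq_neg.1 hQ.symm)) (hω.twist hQ)
    (twist_comp_twist hω' hω (neg_eq_iff_eq_neg.1 hQ.symm) h') (twist_comp_twist hω hω' hQ h)

end IsChirality

end Chirality

section VolumeElement

variable {R M : Type*} [CommRing R] [AddCommGroup M] [Module R M] {Q Q' : QuadraticForm R M}
  {n : ℕ} {v : Fin n → M}

/-- The Clifford product `v₀ v₁ ⋯ vₙ₋₁`, which for an orthonormal basis is the volume element. -/
noncomputable def volumeElement (Q : QuadraticForm R M) (v : Fin n → M) : CliffordAlgebra Q :=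
  (List.ofFn fun i => ι Q (v i)).prod

theorem volumeElement_mem_evenOdd (Q : QuadraticForm R M) (v : Fin n → M) :
    volumeElement Q v ∈ evenOdd Q n := by
  simpa [volumeElement] using SetLike.list_prod_ofFn_mem_graded (A := evenOdd Q) (fun _ => 1) _
    fun i => ι_mem_evenOdd_one Q (v i)

theorem volumeElement_mul_ι_of_isOrtho {x : M} (h : ∀ i, Q.IsOrtho (v i) x) :
    volumeElement Q v * ι Q x = (-1 : ℤˣ) ^ n • (ι Q x * volumeElement Q v) := by
  have := prod_ofFn_mul_eq_smul (f := fun i => ι Q (v i)) (x := ι Q x) (s := fun _ => -1)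
    fun i => by simpa using ι_mul_ι_comm_of_isOrtho (h i)
  simpa [volumeElement] using this

theorem volumeElement_mul_ι_of_pairwise_isOrtho
    (hv : Pairwise fun i j => Q.IsOrtho (v i) (v j)) (i : Fin n) :
    volumeElement Q v * ι Q (v i) = (-1 : ℤˣ) ^ (n + 1) • (ι Q (v i) * volumeElement Q v) := by
  let s : Fin n → ℤˣ := fun j => -1 * (Pi.mulSingle i (-1) : Fin n → ℤˣ) j
  have prod_s : ∏ j, s j = (-1) ^ (n + 1) := by
    simp [s, Finset.prod_neg, pow_succ]
  rw [← prod_s]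
  refine prod_ofFn_mul_eq_smul fun j => ?_
  obtain rfl | hij := eq_or_ne j i
  · simp [s]
  · simpa [s, hij] using ι_mul_ι_comm_of_isOrtho (hv hij)

theorem volumeElement_mul_self (hv : Pairwise fun i j => Q.IsOrtho (v i) (v j)) :
    volumeElement Q v * volumeElement Q v =
      (-1 : ℤˣ) ^ n.choose 2 • algebraMap R _ (∏ i, Q (v i)) := by
  induction n with
  | zero => simp [volumeElement]
  | succ n ih =>
    set e := ι Q (v 0)
    set τ := volumeElement Q (Fin.tail v)
    have cons : volumeElement Q v = e * τ := by simp [volumeElement, e, τ, Fin.tail]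
    have swap : τ * e = (-1 : ℤˣ) ^ n • (e * τ) :=
      volumeElement_mul_ι_of_isOrtho fun i => hv i.succ_ne_zero
    have τ_sq := ih (v := Fin.tail v) fun i j hij => hv (Fin.succ_injective n |>.ne hij)
    calc volumeElement Q v * volumeElement Q v
        = (-1 : ℤˣ) ^ n • (e * e * (τ * τ)) := by
          rw [cons, mul_assoc, ← mul_assoc τ, swap, smul_mul_assoc, mul_smul_comm]
          simp only [mul_assoc]
      _ = (-1 : ℤˣ) ^ (n + 1).choose 2 • algebraMap R _ (∏ i, Q (v i)) := by
          rw [τ_sq, ι_sq_scalar, mul_smul_comm, smul_smul, ← pow_add, ← map_mul,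
            Nat.choose_succ_succ' n 1, Nat.choose_one_right, Fin.prod_univ_succ]
          rfl

theorem even_of_four_dvd (hn : 4 ∣ n) : Even n :=
  Nat.even_iff.2 (by omega)

theorem even_choose_two_of_four_dvd (hn : 4 ∣ n) : Even (n.choose 2) := by
  obtain ⟨k, rfl⟩ := hn
  have : (4 * k).choose 2 = 2 * (k * (4 * k - 1)) := by
    rw [Nat.choose_two_right]
    exact Nat.div_eq_of_eq_mul_right two_pos (by ring)
  exact this ▸ even_two_mul _

theorem isChirality_volumeElement (hn : 4 ∣ n) (hv : Pairwise fun i j => Q.IsOrtho (v i) (v j))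
    (hspan : Submodule.span R (Set.range v) = ⊤) (hprod : ∏ i, Q (v i) = 1) :
    IsChirality Q (volumeElement Q v) where
  mem_even := by
    simpa only [(ZMod.natCast_eq_zero_iff_even).2 (even_of_four_dvd hn)] using
      volumeElement_mem_evenOdd Q v
  mul_self := by
    rw [volumeElement_mul_self hv, (even_choose_two_of_four_dvd hn).neg_one_pow, one_smul, hprod,
      map_one]
  anticomm x := by
    suffices LinearMap.mulLeft R (volumeElement Q v) ∘ₗ ι Q =
        -(LinearMap.mulRight R (volumeElement Q v) ∘ₗ ι Q) from LinearMap.congr_fun this x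
    refine LinearMap.ext_on_range hspan fun i => ?_
    simp [volumeElement_mul_ι_of_pairwise_isOrtho hv, (even_of_four_dvd hn).add_one.neg_one_pow]

theorem IsChirality.twist_volumeElement (hn : 4 ∣ n) (hω : IsChirality Q (volumeElement Q v))
    (hQ : Q' = -Q) : hω.twist hQ (volumeElement Q' v) = volumeElement Q v := by
  calc hω.twist hQ (volumeElement Q' v)
      = (List.ofFn fun i => ι Q (v i) * volumeElement Q v).prod := by
        simp only [volumeElement, map_list_prod, List.map_ofFn, Function.comp_def, twist_ι]
    _ = volumeElement Q v := by
        rw [prod_ofFn_mul_right_of_anticomm fun i => by rw [hω.anticomm, neg_neg],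
          hω.pow_of_even (even_of_four_dvd hn), (even_choose_two_of_four_dvd hn).neg_one_pow,
          one_smul, mul_one, volumeElement]

/-- An orthogonal spanning family of `4k` vectors whose values multiply to one lets `Q` change sign
inside an orthogonal sum. -/
noncomputable def prodNegEquiv {M₂ : Type*} [AddCommGroup M₂] [Module R M₂]
    (Q₂ : QuadraticForm R M₂) (hQ : Q' = -Q) (hn : 4 ∣ n)
    (hv : Pairwise fun i j => Q.IsOrtho (v i) (v j))
    (hspan : Submodule.span R (Set.range v) = ⊤) (hprod : ∏ i, Q (v i) = 1) :
    CliffordAlgebra (Q.prod Q₂) ≃ₐ[R] CliffordAlgebra (Q'.prod Q₂) :=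
  have hω : IsChirality Q (volumeElement Q v) := isChirality_volumeElement hn hv hspan hprod
  have hω' : IsChirality Q' (volumeElement Q' v) := by
    refine isChirality_volumeElement hn (fun i j hij => ?_) hspan ?_
    · simpa [hQ, isOrtho_def, add_comm] using congrArg Neg.neg (hv hij)
    · simpa [hQ, Finset.prod_neg, (even_of_four_dvd hn).neg_one_pow] using hprod
  have hQ' : Q = -Q' := neg_eq_iff_eq_neg.1 hQ.symm
  prodCongrLeft Q₂
    (hω.twistEquiv hω' hQ (hω.twist_volumeElement hn hQ) (hω'.twist_volumeElement hn hQ'))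
    (hω'.twist_ι_mem_odd hQ') (hω.twist_ι_mem_odd hQ)

end VolumeElement

section WeightedSumSquares

variable {R ι₁ ι₂ κ : Type*} [CommSemiring R] [Fintype ι₁] [Fintype ι₂] [Fintype κ]

theorem neg_weightedSumSquares {R : Type*} [CommRing R] (w : κ → R) :
    -weightedSumSquares R w = weightedSumSquares R (-w) := by
  ext x
  simp [weightedSumSquares_apply]

theorem weightedSumSquares_single_one [DecidableEq κ] (w : κ → R) (i : κ) :
    weightedSumSquares R w (Pi.single i 1) = w i := by
  simp [weightedSumSquares_apply, Pi.single_apply]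

theorem span_range_single (R κ : Type*) [Semiring R] [Finite κ] [DecidableEq κ] :
    Submodule.span R (Set.range fun i : κ => (Pi.single i 1 : κ → R)) = ⊤ := by
  rw [← (Pi.basisFun R κ).span_eq, funext (Pi.basisFun_apply R κ)]

theorem pairwise_isOrtho_single [DecidableEq κ] (w : κ → R) :
    Pairwise fun i j => (weightedSumSquares R w).IsOrtho (Pi.single i 1) (Pi.single j 1) := by
  intro i j hij
  rw [isOrtho_def, weightedSumSquares_apply, weightedSumSquares_apply, weightedSumSquares_apply,
    ← Finset.sum_add_distrib]
  refine Finset.sum_congr rfl fun k _ => ?_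
  obtain rfl | hki := eq_or_ne k i
  · simp [hij]
  · simp [hki]

/-- A diagonal form splits as an orthogonal sum along a partition of its coordinates. -/
def weightedSumSquaresSumIsometryEquiv (σ : ι₁ ⊕ ι₂ ≃ κ) {w₁ : ι₁ → R} {w₂ : ι₂ → R} {w : κ → R}
    (h₁ : ∀ i, w (σ (.inl i)) = w₁ i) (h₂ : ∀ i, w (σ (.inr i)) = w₂ i) :
    (weightedSumSquares R w).IsometryEquiv
      ((weightedSumSquares R w₁).prod (weightedSumSquares R w₂)) where
  __ := (LinearEquiv.funCongrLeft R R σ).trans (LinearEquiv.sumArrowLequivProdArrow _ _ R R)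
  map_app' x := by
    simp [weightedSumSquares_apply, ← σ.sum_comp, LinearMap.funLeft, ← h₁, ← h₂]

end WeightedSumSquares

/-- Splits off `n` of the positive directions of `Qpq (p + n) q`. -/
noncomputable def qpqAddLeftIsometryEquiv (p q n : ℕ) :
    (Qpq (p + n) q).IsometryEquiv
      ((weightedSumSquares ℝ (1 : Fin n → ℝ)).prod (Qpq p q)) :=
  weightedSumSquaresSumIsometryEquiv (finSumFinEquiv.trans (finCongr (by omega)))
    (fun i => by simp [show (i : ℕ) < p + n by omega])
    (fun j => by simp [add_comm n])

/-- Splits off `n` of the negative directions of `Qpq p (q + n)`. -/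
noncomputable def qpqAddRightIsometryEquiv (p q n : ℕ) :
    (Qpq p (q + n)).IsometryEquiv
      ((weightedSumSquares ℝ (-1 : Fin n → ℝ)).prod (Qpq p q)) :=
  weightedSumSquaresSumIsometryEquiv
    ((Equiv.sumComm _ _).trans (finSumFinEquiv.trans (finCongr (by omega))))
    (fun i => by simp [show ¬ p + q + (i : ℕ) < p by omega])
    (fun j => by simp)

theorem cl_iso_shift_four_general (p q n : ℕ) (hn : 4 ∣ n) (hp : n ≤ p) :
    Nonempty (Cl p q ≃ₐ[ℝ] Cl (p - n) (q + n)) := by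
  obtain ⟨r, rfl⟩ := Nat.exists_eq_add_of_le' hp
  rw [Nat.add_sub_cancel]
  let flip := prodNegEquiv (Qpq r q) (neg_weightedSumSquares (1 : Fin n → ℝ)).symm hn
    (pairwise_isOrtho_single 1) (span_range_single ℝ (Fin n))
    (by simp only [weightedSumSquares_single_one, Pi.one_apply, Finset.prod_const_one])
  exact ⟨(equivOfIsometry (qpqAddLeftIsometryEquiv r q n)).trans <|
    flip.trans (equivOfIsometry (qpqAddRightIsometryEquiv r q n)).symm⟩

/-- `Cl_{p,q} ≅ Cl_{p−4,q+4}` for `p ≥ 4`, as real associative unital algebras. -/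
theorem cl_iso_shift_four (p q : ℕ) (hp : 4 ≤ p) :
    Nonempty (Cl p q ≃ₐ[ℝ] Cl (p - 4) (q + 4)) :=
  cl_iso_shift_four_general p q 4 dvd_rfl hp
end

section
/- Let n = p + q. For an ordered multi-index A = {a₁ < ⋯ < a_k} ⊆ {1,…,n} set e_A := e_{a₁}⋯e_{a_k} (with e_∅ := e). Every e_A satisfies (e_A)² = +e or (e_A)² = −e. Let P be the number of subsets A ⊆ {1,…,n} with (e_A)² = e and let Q be the number with (e_A)² = −e. Then P = 2^{(n−1)/2}·(2^{(n−1)/2} + sin(π(p−q+1)/4)) and Q = 2^{(n−1)/2}·(2^{(n−1)/2} − sin(π(p−q+1)/4)); equivalently, P − Q = 2^{(n+1)/2}·sin(π(p−q+1)/4) and P + Q = 2^n. -/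
open CliffordAlgebra

/-- The basis element `e_A` of `Cl_{p,q}` attached to an ordered multi-index `A`:
the product of the generators with indices in `A`, in increasing order (`e_∅ = 1`). -/
noncomputable def basisEl (p q : ℕ) (A : Finset (Fin (p + q))) : Cl p q :=
  ((A.sort (· ≤ ·)).map (gen p q)).prod


open Real

/-!
Moving generators past each other gives `e_A * e_A = (-1) ^ (#A choose 2) * ∏ i ∈ A, η i`, so the
count is governed by the sum of these signs over all `A`. Since `(-1) ^ (k choose 2)` is the
imaginary part of `(1 + I) * I ^ k`, that sum is the imaginary part of
`(1 + I) * ∏ i, (1 + η i * I)`, a product of `n + 1` factors of modulus `√2` and argument `±π / 4`.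
-/

section Anticommuting

/-- The sign by which `e_A` squares when the anticommuting generators square to the signs `w i`. -/
def squareSign {α : Type*} (w : α → ℤˣ) (A : Finset α) : ℤˣ :=
  (-1) ^ A.card.choose 2 * ∏ i ∈ A, w i

variable {M : Type*} [Monoid M] [HasDistribNeg M]

theorem commute_neg_one_pow (x : M) (k : ℕ) : Commute x ((-1) ^ k) :=
  (Commute.neg_one_right x).pow_right k

theorem list_prod_mul_of_forall_anticommute {l : List M} {x : M}
    (h : ∀ y ∈ l, x * y = -(y * x)) :
    l.prod * x = (-1) ^ l.length * (x * l.prod) := by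
  induction l with
  | nil => simp
  | cons y l ih =>
    rw [List.forall_mem_cons] at h
    calc (y :: l).prod * x = y * ((-1) ^ l.length * (x * l.prod)) := by
          rw [List.prod_cons, mul_assoc, ih h.2]
      _ = (-1) ^ l.length * (y * x * l.prod) := by
          rw [(commute_neg_one_pow y _).left_comm, mul_assoc y]
      _ = (-1) ^ (y :: l).length * (x * (y :: l).prod) := by
          rw [List.length_cons, pow_succ, List.prod_cons, ← mul_assoc x, h.1]
          simp only [mul_neg, mul_one, neg_mul, neg_neg]

theorem list_prod_mul_self_of_pairwise_anticommute {l : List M}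
    (h : l.Pairwise fun x y ↦ x * y = -(y * x)) :
    l.prod * l.prod = (-1) ^ l.length.choose 2 * (l.map fun x ↦ x * x).prod := by
  induction l with
  | nil => simp
  | cons x l ih =>
    rw [List.pairwise_cons] at h
    calc (x :: l).prod * (x :: l).prod = x * (l.prod * x) * l.prod := by
          simp only [List.prod_cons, mul_assoc]
      _ = (-1) ^ l.length * (x * x * (l.prod * l.prod)) := by
          rw [list_prod_mul_of_forall_anticommute h.1, (commute_neg_one_pow x _).left_comm]
          simp only [mul_assoc]
      _ = (-1) ^ l.length * (-1) ^ l.length.choose 2 * (x * x * (l.map fun y ↦ y * y).prod) := by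
          rw [ih h.2, (commute_neg_one_pow (x * x) _).left_comm,
            mul_assoc ((-1) ^ l.length)]
      _ = (-1) ^ (x :: l).length.choose 2 * ((x :: l).map fun y ↦ y * y).prod := by
          rw [List.length_cons, Nat.choose_succ_succ' _ 1, Nat.choose_one_right, pow_add,
            List.map_cons, List.prod_cons]

variable {α : Type*} [LinearOrder α]

/-- The ordered product `v a₁ * ⋯ * v a_k` over a multi-index `A = {a₁ < ⋯ < a_k}`, for a family `v`
in any monoid; `basisEl p q` is the case `v = gen p q`. -/
def sortedProd {N : Type*} [Monoid N] (v : α → N) (A : Finset α) : N :=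
  ((A.sort (· ≤ ·)).map v).prod

theorem sortedProd_mul_self {R : Type*} [Ring R] {v : α → R} {w : α → ℤˣ}
    (anticomm : Pairwise fun i j ↦ v i * v j = -(v j * v i))
    (sq : ∀ i, v i * v i = ((w i : ℤ) : R)) (A : Finset α) :
    sortedProd v A * sortedProd v A = ((squareSign w A : ℤ) : R) := by
  have pairwise : ((A.sort (· ≤ ·)).map v).Pairwise fun x y ↦ x * y = -(y * x) :=
    List.pairwise_map.2 ((A.sort_nodup _).imp fun hij ↦ anticomm hij)
  have square_comp : (fun x ↦ x * x) ∘ v = fun i ↦ ((w i : ℤ) : R) := funext sq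
  have prod_signs : ((A.sort (· ≤ ·)).map fun i ↦ ((w i : ℤ) : R)).prod
      = ((∏ i ∈ A, (w i : ℤ) : ℤ) : R) := by
    rw [← A.sort_toFinset (· ≤ ·), List.prod_toFinset _ (A.sort_nodup _), Int.cast_list_prod,
      List.map_map, A.sort_toFinset]
    rfl
  rw [sortedProd, list_prod_mul_self_of_pairwise_anticommute pairwise, List.length_map,
    Finset.length_sort, List.map_map, square_comp, prod_signs, squareSign]
  push_cast
  rfl

end Anticommuting

section Counting

variable {α : Type*} [Fintype α] (f : α → ℤˣ)

theorem ncard_eq_one_add_ncard_eq_neg_one :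
    {a | f a = 1}.ncard + {a | f a = -1}.ncard = Fintype.card α := by
  have compl : {a | f a = -1} = {a | f a = 1}ᶜ := by
    ext a
    exact Int.units_ne_iff_eq_neg.symm
  rw [compl, Set.ncard_add_ncard_compl, Nat.card_eq_fintype_card]

theorem ncard_eq_one_sub_ncard_eq_neg_one :
    ({a | f a = 1}.ncard : ℤ) - {a | f a = -1}.ncard = ∑ a, (f a : ℤ) := by
  have unit_eq (u : ℤˣ) : (u : ℤ) = (if u = 1 then 1 else 0) - if u = -1 then 1 else 0 := by
    revert u
    decide
  simp only [unit_eq (f _), Finset.sum_sub_distrib, Finset.sum_boole, Set.ncard_eq_toFinset_card',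
    Set.toFinset_ofPred]

end Counting

section SignSum

open Complex (I)

theorem neg_one_pow_choose_two_eq_im (k : ℕ) :
    (-1 : ℝ) ^ k.choose 2 = ((1 + I) * I ^ k).im := by
  induction k using Nat.twoStepInduction with
  | zero => simp
  | one => simp
  | more k ih _ =>
    have choose_add_two : (k + 2).choose 2 = k.choose 2 + (2 * k + 1) := by
      rw [Nat.choose_succ_succ' _ 1, Nat.choose_succ_succ' _ 1, Nat.choose_one_right,
        Nat.choose_one_right]
      ring
    rw [choose_add_two, pow_add, ih, (odd_two_mul_add_one k).neg_one_pow, pow_add, Complex.I_sq]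
    simp only [mul_neg, mul_one, Complex.neg_im]

theorem sum_neg_one_pow_choose_two_mul_prod {α : Type*} (w : α → ℝ) (s : Finset α) :
    ∑ A ∈ s.powerset, (-1) ^ A.card.choose 2 * ∏ i ∈ A, w i
      = ((1 + I) * ∏ i ∈ s, (1 + w i * I)).im := by
  rw [Finset.prod_one_add, Finset.mul_sum, Complex.im_sum]
  refine Finset.sum_congr rfl fun A _ ↦ ?_
  rw [Finset.prod_mul_distrib, Finset.prod_const, mul_comm (∏ i ∈ A, (w i : ℂ)), ← mul_assoc,
    ← Complex.ofReal_prod, Complex.im_mul_ofReal, neg_one_pow_choose_two_eq_im]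

theorem one_add_unit_mul_I (u : ℤˣ) :
    1 + ((u : ℤ) : ℝ) * I = (√2 : ℂ) * Complex.exp ((π / 4 * (u : ℤ) : ℝ) * I) := by
  have sqrt_two_mul_half : √2 * (√2 / 2) = 1 := by
    rw [← mul_div_assoc, Real.mul_self_sqrt zero_le_two, div_self two_ne_zero]
  obtain rfl | rfl := Int.units_eq_one_or u <;>
    apply Complex.ext <;>
    simp [Complex.exp_ofReal_mul_I_re, Complex.exp_ofReal_mul_I_im, sqrt_two_mul_half,
      -Complex.ofReal_mul, -Complex.ofReal_div, -Complex.ofReal_neg]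

variable {α : Type*} [Fintype α]

theorem sum_squareSign (w : α → ℤˣ) :
    ∑ A, ((squareSign w A : ℤ) : ℝ)
      = √2 ^ (Fintype.card α + 1) * sin (π * (∑ i, ((w i : ℤ) : ℝ) + 1) / 4) := by
  have polar : (1 + I) * ∏ i, (1 + ((w i : ℤ) : ℝ) * I)
      = (√2 ^ (Fintype.card α + 1) : ℝ)
        * Complex.exp ((π * (∑ i, ((w i : ℤ) : ℝ) + 1) / 4 : ℝ) * I) := by
    have one_add_I := one_add_unit_mul_I 1
    simp only [Units.val_one, Int.cast_one, Complex.ofReal_one, one_mul, mul_one] at one_add_I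
    simp only [one_add_I, one_add_unit_mul_I, Finset.prod_mul_distrib, Finset.prod_const,
      Finset.card_univ, ← Complex.exp_sum]
    rw [mul_mul_mul_comm, ← Complex.exp_add, ← pow_succ', ← Finset.sum_mul, ← add_mul,
      Complex.ofReal_pow]
    congr 3
    push_cast [← Finset.mul_sum]
    ring
  calc ∑ A, ((squareSign w A : ℤ) : ℝ)
      = ∑ A ∈ Finset.univ.powerset, (-1) ^ A.card.choose 2 * ∏ i ∈ A, ((w i : ℤ) : ℝ) := by
        simp [squareSign]
    _ = ((1 + I) * ∏ i, (1 + ((w i : ℤ) : ℝ) * I)).im := sum_neg_one_pow_choose_two_mul_prod _ _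
    _ = √2 ^ (Fintype.card α + 1) * sin (π * (∑ i, ((w i : ℤ) : ℝ) + 1) / 4) := by
        rw [polar, Complex.im_ofReal_mul, Complex.exp_ofReal_mul_I_im]

end SignSum

section WeightedSumSquares

variable {R α : Type*} [CommSemiring R] [Fintype α] [DecidableEq α] (w : α → R)

theorem weightedSumSquares_single (i : α) (c : R) :
    QuadraticMap.weightedSumSquares R w (Pi.single i c) = w i * (c * c) := by
  rw [QuadraticMap.weightedSumSquares_apply, Finset.sum_eq_single i]
  · rw [Pi.single_eq_same, smul_eq_mul]
  · intro j _ hj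
    rw [Pi.single_eq_of_ne hj, mul_zero, smul_zero]
  · exact fun hi ↦ absurd (Finset.mem_univ i) hi

theorem weightedSumSquares_isOrtho_single {i j : α} (hij : i ≠ j) (c d : R) :
    (QuadraticMap.weightedSumSquares R w).IsOrtho (Pi.single i c) (Pi.single j d) := by
  simp only [QuadraticMap.isOrtho_def, QuadraticMap.weightedSumSquares_apply,
    ← Finset.sum_add_distrib, ← smul_add]
  refine Finset.sum_congr rfl fun k _ ↦ ?_
  obtain rfl | hk := eq_or_ne k i
  · simp [Pi.single_eq_of_ne hij]
  · simp [Pi.single_eq_of_ne hk]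

end WeightedSumSquares

section Signature

variable (p q : ℕ)

/-- The signs `η_{ii}` of the standard metric of signature `(p, q)`, with indices from `0`. -/
def signatureSign (i : Fin (p + q)) : ℤˣ := if (i : ℕ) < p then 1 else -1

theorem sum_signatureSign : ∑ i, ((signatureSign p q i : ℤ) : ℝ) = p - q := by
  simp [Fin.sum_univ_add, signatureSign, sub_eq_add_neg]

theorem gen_mul_self (i : Fin (p + q)) :
    gen p q i * gen p q i = ((signatureSign p q i : ℤ) : Cl p q) := by
  have form_single : Qpq p q (Pi.single i 1) = ((signatureSign p q i : ℤ) : ℝ) := by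
    rw [Qpq, weightedSumSquares_single, signatureSign]
    split_ifs <;> simp
  rw [gen, ι_sq_scalar, form_single, map_intCast]

theorem gen_anticommute : Pairwise fun i j ↦ gen p q i * gen p q j = -(gen p q j * gen p q i) :=
  fun _ _ hij ↦ ι_mul_ι_comm_of_isOrtho (weightedSumSquares_isOrtho_single _ hij 1 1)

end Signature

theorem eq_and_eq_of_add_eq_of_sub_eq {P Q s : ℝ} {n : ℕ} (P_add_Q : P + Q = 2 ^ n)
    (P_sub_Q : P - Q = (2 : ℝ) ^ (((n : ℝ) + 1) / 2) * s) :
    P = (2 : ℝ) ^ (((n : ℝ) - 1) / 2) * ((2 : ℝ) ^ (((n : ℝ) - 1) / 2) + s) ∧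
      Q = (2 : ℝ) ^ (((n : ℝ) - 1) / 2) * ((2 : ℝ) ^ (((n : ℝ) - 1) / 2) - s) := by
  have rpow_half_succ : (2 : ℝ) ^ (((n : ℝ) + 1) / 2) = 2 * (2 : ℝ) ^ (((n : ℝ) - 1) / 2) := by
    rw [show ((n : ℝ) + 1) / 2 = 1 + ((n : ℝ) - 1) / 2 by ring, Real.rpow_add zero_lt_two,
      Real.rpow_one]
  have two_pow : (2 : ℝ) ^ n =
      2 * ((2 : ℝ) ^ (((n : ℝ) - 1) / 2) * (2 : ℝ) ^ (((n : ℝ) - 1) / 2)) := by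
    rw [← Real.rpow_natCast, ← mul_assoc, ← rpow_half_succ, ← Real.rpow_add zero_lt_two]
    ring_nf
  rw [rpow_half_succ] at P_sub_Q
  rw [two_pow] at P_add_Q
  constructor <;> linarith

theorem exterior_signature_formulas_general {R α : Type*} [Ring R] [Fintype α] [LinearOrder α]
    {v : α → R} {w : α → ℤˣ} (neg_one_ne_one : (-1 : R) ≠ 1)
    (anticomm : Pairwise fun i j ↦ v i * v j = -(v j * v i))
    (sq : ∀ i, v i * v i = ((w i : ℤ) : R)) {n : ℕ} (hn : Fintype.card α = n) :
    (∀ A : Finset α,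
        sortedProd v A * sortedProd v A = 1 ∨ sortedProd v A * sortedProd v A = -1) ∧
    (({A : Finset α | sortedProd v A * sortedProd v A = 1}.ncard : ℝ) =
        (2 : ℝ) ^ (((n : ℝ) - 1) / 2) *
          ((2 : ℝ) ^ (((n : ℝ) - 1) / 2) + sin (π * (∑ i, ((w i : ℤ) : ℝ) + 1) / 4))) ∧
    (({A : Finset α | sortedProd v A * sortedProd v A = -1}.ncard : ℝ) =
        (2 : ℝ) ^ (((n : ℝ) - 1) / 2) *
          ((2 : ℝ) ^ (((n : ℝ) - 1) / 2) - sin (π * (∑ i, ((w i : ℤ) : ℝ) + 1) / 4))) ∧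
    (({A : Finset α | sortedProd v A * sortedProd v A = 1}.ncard : ℝ) -
        ({A : Finset α | sortedProd v A * sortedProd v A = -1}.ncard : ℝ) =
        (2 : ℝ) ^ (((n : ℝ) + 1) / 2) * sin (π * (∑ i, ((w i : ℤ) : ℝ) + 1) / 4)) ∧
    ({A : Finset α | sortedProd v A * sortedProd v A = 1}.ncard +
        {A : Finset α | sortedProd v A * sortedProd v A = -1}.ncard = 2 ^ n) := by
  subst hn
  have sq_eq_one (A : Finset α) : sortedProd v A * sortedProd v A = 1 ↔ squareSign w A = 1 := by
    rw [sortedProd_mul_self anticomm sq]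
    obtain h | h := Int.units_eq_one_or (squareSign w A) <;> simp [h, neg_one_ne_one]
  have sq_eq_neg_one (A : Finset α) :
      sortedProd v A * sortedProd v A = -1 ↔ squareSign w A = -1 := by
    rw [sortedProd_mul_self anticomm sq]
    obtain h | h := Int.units_eq_one_or (squareSign w A) <;> simp [h, neg_one_ne_one.symm]
  simp only [sq_eq_one, sq_eq_neg_one]
  have P_add_Q := ncard_eq_one_add_ncard_eq_neg_one (squareSign w)
  rw [Fintype.card_finset] at P_add_Q
  have P_sub_Q : ({A | squareSign w A = 1}.ncard : ℝ) - {A | squareSign w A = -1}.ncard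
      = (2 : ℝ) ^ (((Fintype.card α : ℝ) + 1) / 2)
        * sin (π * (∑ i, ((w i : ℤ) : ℝ) + 1) / 4) := by
    rw [Real.rpow_div_two_eq_sqrt _ zero_le_two, ← Nat.cast_add_one, Real.rpow_natCast,
      ← sum_squareSign]
    exact_mod_cast ncard_eq_one_sub_ncard_eq_neg_one (squareSign w)
  obtain ⟨P_eq, Q_eq⟩ := eq_and_eq_of_add_eq_of_sub_eq (mod_cast P_add_Q) P_sub_Q
  exact ⟨fun A ↦ Int.units_eq_one_or _, P_eq, Q_eq, P_sub_Q, P_add_Q⟩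

/-- Each basis element `e_A` squares to `±e`; if `P` (resp. `Q`) is the number of
multi-indices with `(e_A)² = e` (resp. `−e`), then
`P = 2^{(n−1)/2}(2^{(n−1)/2} + sin(π(p−q+1)/4))`,
`Q = 2^{(n−1)/2}(2^{(n−1)/2} − sin(π(p−q+1)/4))`; equivalently
`P − Q = 2^{(n+1)/2} sin(π(p−q+1)/4)` and `P + Q = 2^n`. -/
theorem exterior_signature_formulas (p q : ℕ) (n : ℕ) (hn : n = p + q) :
    (∀ A : Finset (Fin (p + q)),
        basisEl p q A * basisEl p q A = 1 ∨ basisEl p q A * basisEl p q A = -1) ∧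
    (({A : Finset (Fin (p + q)) | basisEl p q A * basisEl p q A = 1}.ncard : ℝ) =
        (2 : ℝ) ^ (((n : ℝ) - 1) / 2) *
          ((2 : ℝ) ^ (((n : ℝ) - 1) / 2) + Real.sin (π * ((p : ℝ) - (q : ℝ) + 1) / 4))) ∧
    (({A : Finset (Fin (p + q)) | basisEl p q A * basisEl p q A = -1}.ncard : ℝ) =
        (2 : ℝ) ^ (((n : ℝ) - 1) / 2) *
          ((2 : ℝ) ^ (((n : ℝ) - 1) / 2) - Real.sin (π * ((p : ℝ) - (q : ℝ) + 1) / 4))) ∧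
    (({A : Finset (Fin (p + q)) | basisEl p q A * basisEl p q A = 1}.ncard : ℝ) -
        ({A : Finset (Fin (p + q)) | basisEl p q A * basisEl p q A = -1}.ncard : ℝ) =
        (2 : ℝ) ^ (((n : ℝ) + 1) / 2) * Real.sin (π * ((p : ℝ) - (q : ℝ) + 1) / 4)) ∧
    ({A : Finset (Fin (p + q)) | basisEl p q A * basisEl p q A = 1}.ncard +
        {A : Finset (Fin (p + q)) | basisEl p q A * basisEl p q A = -1}.ncard = 2 ^ n) := by
  have : IsAddTorsionFree (Cl p q) := .of_isTorsionFree ℝ _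
  rw [← sum_signatureSign p q]
  exact exterior_signature_formulas_general (neg_ne_self.2 one_ne_zero) (gen_anticommute p q)
    (gen_mul_self p q) ((Fintype.card_fin _).trans hn.symm)
end
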